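/- The toric ideal I_{S_4} is generated by its elements of total degree at most 3; that is, I_{S_4} equals the ideal generated by the set {f ∈ I_{S_4} : the total degree of f is at most 3}. -/

import Mathlib

/-- The toric ideal `I_{S_4}`: the kernel of
`φ : ℂ[x_π : π ∈ S_4] → ℂ[t_{ij}]`, `x_π ↦ ∏_i t_{i, π(i)}`. -/
noncomputable def toricIdeal4 : Ideal (MvPolynomial (Equiv.Perm (Fin 4)) ℂ) :=
  RingHom.ker (MvPolynomial.aeval fun π : Equiv.Perm (Fin 4) =>
    ∏ i : Fin 4, MvPolynomial.X (R := ℂ) (i, π i) :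
      MvPolynomial (Equiv.Perm (Fin 4)) ℂ →ₐ[ℂ] MvPolynomial (Fin 4 × Fin 4) ℂ).toRingHom

namespace Toric4

open Finset

/-- Two multisets of permutations have the same fibre (equal sums of permutation matrices). -/
def Fib {n : ℕ} (A B : Multiset (Equiv.Perm (Fin n))) : Prop :=
  ∀ i, A.map (fun a => a i) = B.map (fun a => a i)

/-- A regular bipartite multigraph decomposes into perfect matchings. -/
lemma decompose {n : ℕ} (d : ℕ) : ∀ (N : Fin n → Multiset (Fin n)),
    (∀ i, (N i).card = d) → (∀ j, ∑ i, (N i).count j = d) →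
    ∃ P : Multiset (Equiv.Perm (Fin n)), ∀ i, P.map (fun a => a i) = N i := by
  induction d with
  | zero =>
    intro N hN _
    exact ⟨0, fun i => by simpa using (Multiset.card_eq_zero.1 (hN i)).symm⟩
  | succ d ih =>
    intro N hN hc
    have hall : ∀ s : Finset (Fin n), s.card ≤ (s.biUnion fun i => (N i).toFinset).card := by
      intro s
      have h1 : s.card * (d + 1) = ∑ i ∈ s, ∑ j ∈ s.biUnion (fun i => (N i).toFinset),
          (N i).count j := by
        rw [← smul_eq_mul, ← Finset.sum_const]
        refine Finset.sum_congr rfl fun i hi => ?_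
        rw [← hN i]
        symm
        apply Multiset.sum_count_eq_card
        intro a ha
        exact Finset.mem_biUnion.2 ⟨i, hi, by simpa using ha⟩
      have h2 : s.card * (d + 1) ≤ (s.biUnion fun i => (N i).toFinset).card * (d + 1) := by
        rw [h1, Finset.sum_comm, ← smul_eq_mul (a := Finset.card _), ← Finset.sum_const]
        refine Finset.sum_le_sum fun j _ => ?_
        rw [← hc j]
        exact Finset.sum_le_sum_of_subset (Finset.subset_univ _)
      exact Nat.le_of_mul_le_mul_right h2 (Nat.succ_pos d)
    obtain ⟨p, hp, hpm⟩ := (Finset.all_card_le_biUnion_card_iff_exists_injective _).1 hall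
    let q : Equiv.Perm (Fin n) := Equiv.ofBijective p (Finite.injective_iff_bijective.1 hp)
    have hq : ∀ i, q i ∈ N i := fun i => Multiset.mem_toFinset.1 (hpm i)
    obtain ⟨P, hP⟩ := ih (fun i => (N i).erase (q i))
      (fun i => by simp [Multiset.card_erase_of_mem (hq i), hN i])
      (fun j => by
        have h1 : ∀ i, (N i).count j = ((N i).erase (q i)).count j + if i = q.symm j then 1 else 0 := by
          intro i
          conv_lhs => rw [← Multiset.cons_erase (hq i)]
          rw [Multiset.count_cons]
          simp only [Equiv.eq_symm_apply, eq_comm]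
        have h2 := hc j
        simp only [h1, Finset.sum_add_distrib] at h2
        simpa using h2)
    exact ⟨q ::ₘ P, fun i => by simp [hP i, Multiset.cons_erase (hq i)]⟩

/-- Birkhoff-type extraction: a covered permutation can be split off. -/
lemma extract {n : ℕ} (S : Multiset (Equiv.Perm (Fin n))) (π : Equiv.Perm (Fin n))
    (hS : S ≠ 0) (h : ∀ i, ∃ a ∈ S, a i = π i) : ∃ S', Fib S (π ::ₘ S') := by
  have hm : ∀ i, π i ∈ S.map (fun a => a i) := fun i => by simpa using h i
  have hcount : ∀ (T : Multiset (Equiv.Perm (Fin n))) (j : Fin n),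
      ∑ i, (T.map (fun a => a i)).count j = T.card := by
    intro T j
    induction T using Multiset.induction_on with
    | empty => simp
    | cons a T ih =>
      simp only [Multiset.map_cons, Multiset.count_cons, Finset.sum_add_distrib, ih,
        Multiset.card_cons]
      congr 1
      have : ∀ i, (if j = a i then 1 else 0) = if i = a.symm j then 1 else 0 := by
        intro i; simp only [Equiv.eq_symm_apply, eq_comm]
      simp [this]
  have hpos : 0 < S.card := Multiset.card_pos.2 hS
  obtain ⟨P, hP⟩ := decompose (S.card - 1) (fun i => (S.map (fun a => a i)).erase (π i))
    (fun i => by simp [Multiset.card_erase_of_mem (hm i)])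
    (fun j => by
      have h1 : ∀ i, (S.map (fun a => a i)).count j =
          ((S.map (fun a => a i)).erase (π i)).count j + if i = π.symm j then 1 else 0 := by
        intro i
        conv_lhs => rw [← Multiset.cons_erase (hm i)]
        rw [Multiset.count_cons]
        simp only [Equiv.eq_symm_apply, eq_comm]
      have h2 := hcount S j
      simp only [h1, Finset.sum_add_distrib] at h2
      simp at h2
      omega)
  exact ⟨P, fun i => by simp [hP i, Multiset.cons_erase (hm i)]⟩

/-- The permutations `a`, `b` can be exchanged for a pair one of which fixes `j` and `k`. -/
def Good (a b : Equiv.Perm (Fin 4)) (j k : Fin 4) : Prop :=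
  ∃ g : Equiv.Perm (Fin 4), (g j = j ∧ g k = k) ∧ ∃ g' : Equiv.Perm (Fin 4),
      ∀ i, (a i = g i ∧ b i = g' i) ∨ (a i = g' i ∧ b i = g i)

instance (a b : Equiv.Perm (Fin 4)) (j k : Fin 4) : Decidable (Good a b j k) := by
  unfold Good
  infer_instance

/-- The only point fixed by `a` is `j`. -/
def Only (a : Equiv.Perm (Fin 4)) (j : Fin 4) : Prop := ∀ i, a i = i ↔ i = j

instance (a : Equiv.Perm (Fin 4)) (j : Fin 4) : Decidable (Only a j) := by
  unfold Only
  infer_instance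

lemma key : ∀ a : Equiv.Perm (Fin 4), Only a 0 → ∀ b : Equiv.Perm (Fin 4), Only b 1 →
    ∀ c : Equiv.Perm (Fin 4), Only c 2 → Good a b 0 1 ∨ Good a c 0 2 ∨ Good b c 1 2 := by
  decide +kernel

section
variable {Q : Type*} [CommMonoid Q] (y : Equiv.Perm (Fin 4) → Q)

lemma small (hy : ∀ A B, Fib A B → A.card ≤ 3 → (A.map y).prod = (B.map y).prod)
    (A : Multiset (Equiv.Perm (Fin 4))) (π : Equiv.Perm (Fin 4))
    (T : Finset (Equiv.Perm (Fin 4))) (hT : ∀ a ∈ T, a ∈ A) (hc : T.card ≤ 3)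
    (h : ∀ i, ∃ a ∈ T, a i = π i) :
    ∃ A', Fib A (π ::ₘ A') ∧ (A.map y).prod = ((π ::ₘ A').map y).prod := by
  have hle : T.val ≤ A := (Multiset.le_iff_subset T.nodup).2 fun a ha => hT a ha
  obtain ⟨R, rfl⟩ := Multiset.le_iff_exists_add.1 hle
  obtain ⟨S', hS'⟩ := extract T.val π
    (by
      obtain ⟨a, ha, _⟩ := h 0
      intro h0
      have : a ∈ T.val := ha
      simp [h0] at this) (fun i => h i)
  refine ⟨S' + R, fun i => ?_, ?_⟩
  · have := hS' i
    rw [← Multiset.cons_add, Multiset.map_add, Multiset.map_add, this]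
  · rw [← Multiset.cons_add, Multiset.map_add, Multiset.map_add, Multiset.prod_add,
      Multiset.prod_add, hy _ _ hS' hc]

/-- The pair exchange step. -/
lemma pairStep (hy : ∀ A B, Fib A B → A.card ≤ 3 → (A.map y).prod = (B.map y).prod)
    (π a b c d g g' : Equiv.Perm (Fin 4)) (A R : Multiset (Equiv.Perm (Fin 4)))
    (hA : A = a ::ₘ b ::ₘ c ::ₘ d ::ₘ R)
    (hg : ∀ i, (a i = g i ∧ b i = g' i) ∨ (a i = g' i ∧ b i = g i))
    (h : ∀ i, g i = π i ∨ c i = π i ∨ d i = π i) :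
    ∃ A', Fib A (π ::ₘ A') ∧ (A.map y).prod = ((π ::ₘ A').map y).prod := by
  have h2 : Fib {a, b} {g, g'} := by
    intro i
    rcases hg i with ⟨h1, h2⟩ | ⟨h1, h2⟩
    · simp [h1, h2]
    · simp only [Multiset.insert_eq_cons, Multiset.map_cons, Multiset.map_singleton, h1, h2]
      exact Multiset.pair_comm _ _
  have e1 : A = {a, b} + (c ::ₘ d ::ₘ R) := by
    rw [hA, Multiset.insert_eq_cons, Multiset.cons_add, Multiset.singleton_add]
  obtain ⟨A', hF, hP⟩ := small y hy ({g, g'} + (c ::ₘ d ::ₘ R)) π {g, c, d}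
    (by simp) Finset.card_le_three (fun i => by simpa using h i)
  refine ⟨A', fun i => ?_, ?_⟩
  · rw [← hF i, e1, Multiset.map_add, Multiset.map_add, h2 i]
  · rw [← hP, e1, Multiset.map_add, Multiset.map_add, Multiset.prod_add, Multiset.prod_add,
      hy _ _ h2 (by simp)]

lemma main (hy : ∀ A B, Fib A B → A.card ≤ 3 → (A.map y).prod = (B.map y).prod)
    (A : Multiset (Equiv.Perm (Fin 4))) (π : Equiv.Perm (Fin 4))
    (h : ∀ i, ∃ a ∈ A, a i = π i) :
    ∃ A', Fib A (π ::ₘ A') ∧ (A.map y).prod = ((π ::ₘ A').map y).prod := by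
  choose f hfA hf using h
  by_cases hbad : ∃ j k, j ≠ k ∧ f k j = π j
  · obtain ⟨j, k, hjk, hkj⟩ := hbad
    refine small y hy A π ((Finset.univ.erase j).image f) ?_ ?_ ?_
    · intro a ha
      obtain ⟨i, _, rfl⟩ := Finset.mem_image.1 ha
      exact hfA i
    · refine Finset.card_image_le.trans ?_
      simp
    · intro i
      by_cases hij : i = j
      · subst hij
        exact ⟨f k, Finset.mem_image.2 ⟨k, by simp [Ne.symm hjk], rfl⟩, hkj⟩
      · exact ⟨f i, Finset.mem_image.2 ⟨i, by simp [hij], rfl⟩, hf i⟩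
  · push Not at hbad
    have hinj : Function.Injective f := by
      intro i j hij
      by_contra hne
      exact hbad i j hne (by rw [← hij]; exact hf i)
    have hle : (Finset.univ.val.map f) ≤ A := by
      refine (Multiset.le_iff_subset (Multiset.Nodup.map hinj Finset.univ.nodup)).2 ?_
      intro a ha
      obtain ⟨i, _, rfl⟩ := Multiset.mem_map.1 ha
      exact hfA i
    obtain ⟨R, hR⟩ := Multiset.le_iff_exists_add.1 hle
    have hR' : A = f 0 ::ₘ f 1 ::ₘ f 2 ::ₘ f 3 ::ₘ R := by
      have hu : Finset.univ.val.map f = f 0 ::ₘ f 1 ::ₘ f 2 ::ₘ {f 3} := rfl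
      rw [hR, hu]; simp
    have e : ∀ k i, (π⁻¹ * f k) i = i ↔ f k i = π i := by
      intro k i
      rw [Equiv.Perm.mul_apply, Equiv.Perm.inv_eq_iff_eq]
    have tr : ∀ (a b g g' : Equiv.Perm (Fin 4)),
        (∀ i, ((π⁻¹ * a) i = g i ∧ (π⁻¹ * b) i = g' i) ∨
          ((π⁻¹ * a) i = g' i ∧ (π⁻¹ * b) i = g i)) →
        ∀ i, (a i = (π * g) i ∧ b i = (π * g') i) ∨ (a i = (π * g') i ∧ b i = (π * g) i) := by
      intro a b g g' H i
      simpa only [Equiv.Perm.mul_apply, Equiv.Perm.inv_eq_iff_eq] using H i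
    have ho : ∀ k, Only (π⁻¹ * f k) k := by
      intro k i
      rw [e]
      constructor
      · intro h
        by_contra hne
        exact hbad i k hne h
      · rintro rfl
        exact hf i
    have hk := key _ (ho 0) _ (ho 1) _ (ho 2)
    rcases hk with ⟨g, hg, g', H⟩ | ⟨g, hg, g', H⟩ | ⟨g, hg, g', H⟩
    · refine pairStep y hy π (f 0) (f 1) (f 2) (f 3) (π * g) (π * g') A R hR' (tr _ _ _ _ H) ?_
      intro i
      fin_cases i <;> simp [hg, hf]
    · refine pairStep y hy π (f 0) (f 2) (f 1) (f 3) (π * g) (π * g') A R ?_ (tr _ _ _ _ H) ?_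
      · rw [hR', Multiset.cons_swap (f 1) (f 2)]
      intro i
      fin_cases i <;> simp [hg, hf]
    · refine pairStep y hy π (f 1) (f 2) (f 0) (f 3) (π * g) (π * g') A R ?_ (tr _ _ _ _ H) ?_
      · rw [hR', Multiset.cons_swap (f 0) (f 1), Multiset.cons_swap (f 0) (f 2)]
      intro i
      fin_cases i <;> simp [hg, hf]

lemma all (hy : ∀ A B, Fib A B → A.card ≤ 3 → (A.map y).prod = (B.map y).prod)
    (B : Multiset (Equiv.Perm (Fin 4))) :
    ∀ A, Fib A B → (A.map y).prod = (B.map y).prod := by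
  induction B using Multiset.induction_on with
  | empty =>
    intro A h
    have h0 := h 0
    simp only [Multiset.map_zero, Multiset.map_eq_zero] at h0
    rw [h0]
  | cons π B ih =>
    intro A h
    obtain ⟨A', hF, hP⟩ := main y hy A π (fun i => by
      have : π i ∈ A.map (fun a => a i) := by rw [h i]; simp
      simpa using this)
    rw [hP, Multiset.map_cons, Multiset.map_cons, Multiset.prod_cons, Multiset.prod_cons,
      ih A' fun i => ?_]
    have := (hF i).symm.trans (h i)
    simpa using this

end

open MvPolynomial

/-- The monomial map. -/
noncomputable def phi : MvPolynomial (Equiv.Perm (Fin 4)) ℂ →ₐ[ℂ] MvPolynomial (Fin 4 × Fin 4) ℂ :=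
  MvPolynomial.aeval fun π : Equiv.Perm (Fin 4) => ∏ i : Fin 4, MvPolynomial.X (R := ℂ) (i, π i)

lemma mem_toric (f : MvPolynomial (Equiv.Perm (Fin 4)) ℂ) : f ∈ toricIdeal4 ↔ phi f = 0 :=
  Iff.rfl

/-- The exponent vector of the image of a multiset of permutations. -/
noncomputable def expo (A : Multiset (Equiv.Perm (Fin 4))) : (Fin 4 × Fin 4) →₀ ℕ :=
  Finsupp.equivFunOnFinite.symm fun p => (A.map (fun a => a p.1)).count p.2

lemma expo_fib {A B : Multiset (Equiv.Perm (Fin 4))} : expo A = expo B ↔ Fib A B := by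
  constructor
  · intro h i
    ext j
    exact DFunLike.congr_fun h (i, j)
  · intro h
    ext p
    simp [expo, h p.1]

lemma phi_prod (A : Multiset (Equiv.Perm (Fin 4))) :
    phi (A.map X).prod = monomial (expo A) 1 := by
  induction A using Multiset.induction_on with
  | empty =>
    have : expo 0 = 0 := by ext p; simp [expo]
    simp [this]
  | cons a A ih =>
    have hX : phi (X a) = monomial (∑ i : Fin 4, Finsupp.single (i, a i) 1) 1 := by
      rw [phi, aeval_X, monomial_sum_one]
      rfl
    rw [Multiset.map_cons, Multiset.prod_cons, map_mul, ih, hX, monomial_mul, one_mul]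
    suffices hs : (∑ i : Fin 4, Finsupp.single (i, a i) 1) + expo A = expo (a ::ₘ A) by rw [hs]
    ext ⟨i, j⟩
    simp only [expo, Finsupp.add_apply, Finsupp.finsetSum_apply, Finsupp.single_apply,
      Finsupp.equivFunOnFinite_symm_apply_apply, Multiset.map_cons, Multiset.count_cons,
      Prod.mk.injEq]
    rw [add_comm]
    congr 1
    rw [Finset.sum_eq_single i]
    · simp [eq_comm]
    · intro b _ hb; simp [hb]
    · simp

lemma monomial_eq (m : Equiv.Perm (Fin 4) →₀ ℕ) :
    (monomial m (1 : ℂ)) = ((Finsupp.toMultiset m).map X).prod := by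
  rw [Finsupp.toMultiset_map, Finsupp.prod_toMultiset, MvPolynomial.monomial_eq, C_1, one_mul,
    Finsupp.prod_mapDomain_index (by simp) (by intros; exact pow_add _ _ _)]

lemma totalDegree_prod (A : Multiset (Equiv.Perm (Fin 4))) :
    ((A.map X).prod : MvPolynomial (Equiv.Perm (Fin 4)) ℂ).totalDegree ≤ A.card := by
  refine (totalDegree_multiset_prod _).trans ?_
  simp

end Toric4

open Toric4 MvPolynomial in
/-- The toric ideal `I_{S_4}` is generated by its elements of total degree at most 3. -/
theorem toricIdeal4_generated_in_degree_three :
    toricIdeal4 = Ideal.span {f : MvPolynomial (Equiv.Perm (Fin 4)) ℂ |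
      f ∈ toricIdeal4 ∧ f.totalDegree ≤ 3} := by
  set J := Ideal.span {f : MvPolynomial (Equiv.Perm (Fin 4)) ℂ |
      f ∈ toricIdeal4 ∧ f.totalDegree ≤ 3} with hJ
  have hcard : ∀ A B : Multiset (Equiv.Perm (Fin 4)), Fib A B → A.card = B.card := by
    intro A B h
    simpa using congrArg Multiset.card (h 0)
  let mk := Ideal.Quotient.mkₐ ℂ J
  have hmk : ∀ A : Multiset (Equiv.Perm (Fin 4)),
      mk (A.map X).prod = (A.map fun a => mk (X a)).prod := by
    intro A
    rw [map_multiset_prod, Multiset.map_map]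
    rfl
  have hall := Toric4.all (fun a => mk (X a)) (by
    intro A B h hA
    rw [← hmk, ← hmk]
    refine Ideal.Quotient.eq.2 (Ideal.subset_span ⟨?_, ?_⟩)
    · rw [mem_toric, map_sub, phi_prod, phi_prod, expo_fib.2 h, sub_self]
    · refine (totalDegree_sub _ _).trans (max_le ?_ ?_)
      · exact (totalDegree_prod A).trans hA
      · exact (totalDegree_prod B).trans (hcard A B h ▸ hA))
  apply le_antisymm
  · intro f hf
    rw [mem_toric] at hf
    classical
    let L : MvPolynomial (Fin 4 × Fin 4) ℂ →ₗ[ℂ] (MvPolynomial (Equiv.Perm (Fin 4)) ℂ ⧸ J) :=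
      (basisMonomials (Fin 4 × Fin 4) ℂ).constr ℂ
        (fun e => ((Function.invFun expo e).map fun a => mk (X a)).prod)
    have hL : L ∘ₗ phi.toLinearMap = mk.toLinearMap := by
      refine (basisMonomials (Equiv.Perm (Fin 4)) ℂ).ext fun m => ?_
      simp only [coe_basisMonomials, LinearMap.comp_apply, AlgHom.toLinearMap_apply]
      rw [Toric4.monomial_eq, phi_prod, hmk]
      have h1 := (basisMonomials (Fin 4 × Fin 4) ℂ).constr_basis ℂ
        (fun e => ((Function.invFun expo e).map fun a => mk (X a)).prod)
        (expo (Finsupp.toMultiset m))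
      rw [coe_basisMonomials] at h1
      refine h1.trans (hall _ _ (expo_fib.1 ?_))
      exact Function.invFun_eq ⟨_, rfl⟩
    have h2 : mk f = 0 := by
      have := LinearMap.congr_fun hL f
      simp only [LinearMap.comp_apply, AlgHom.toLinearMap_apply, hf, map_zero] at this
      exact this.symm
    exact Ideal.Quotient.eq_zero_iff_mem.1 h2
  · exact Ideal.span_le.2 fun f hf => hf.1
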